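/- arXiv:0907.0684 — 5 statements merged into one kernel-verified Lean document; each statement's English description precedes it below -/
import Mathlib

section
/- There are exactly two pairs (X₁, X₂) of positive real numbers satisfying the Einstein system with parameters γ₁ = 1/2, γ₂ = 1/6, b₁ = 1/8, b₂ = 1/6, r = 1/2. (This is the algebraic content of the theorem: the bisymmetric fibration of Type II corresponding to the triple (𝔤₂, 𝔰𝔲₂ ⊕ 𝔰𝔲₂, ℝ ⊕ ℝ) admits, up to homothety, exactly two Einstein adapted metrics, none of which is binormal or restricts to an Einstein metric on the fiber.) -/
/-- The Einstein system (E1)–(E2) for a Type II bisymmetric fibration,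
in unknowns `X₁ X₂` with parameters `γ₁ γ₂ b₁ b₂ r`. -/
def EinsteinSystem (γ₁ γ₂ b₁ b₂ r X₁ X₂ : ℝ) : Prop :=
  2*γ₁*X₁^2*X₂ + (1-γ₁)*X₂ - 2*γ₂*X₁*X₂^2 - (1-γ₂)*X₁ = 0 ∧
  2*b₁*X₂ + 2*b₂*X₁ - 4*r*X₁*X₂ + 2*γ₁*X₁^2*X₂ + (1-γ₁)*X₂ = 0

/-! Equation (E2) is linear in `X₂`, so it determines `X₂` as a rational function of `X₁`; for
`b₂ > 0`, positivity of `X₂` says that the denominator is negative. Substituting into (E1) leaves a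
quartic in `X₁`. For the `𝔤₂` parameters the denominator is negative exactly for `|X₁ - 1| < 1/2`,
and there the quartic is strictly decreasing before `1` and convex after `1`, with signs `+, -, +`
at `1/2, 1, 3/2`; so it has one zero on either side of `1`. -/

open Set

section UniqueValue

theorem existsUnique_mem_Ioo_eq_of_strictAntiOn {α δ : Type*}
    [ConditionallyCompleteLinearOrder α] [TopologicalSpace α] [OrderTopology α] [DenselyOrdered α]
    [LinearOrder δ] [TopologicalSpace δ] [OrderClosedTopology δ] {f : α → δ} {a b : α} {v : δ}
    (hab : a ≤ b) (hcont : ContinuousOn f (Icc a b)) (hanti : StrictAntiOn f (Icc a b))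
    (ha : v < f a) (hb : f b < v) : ∃! x, x ∈ Ioo a b ∧ f x = v := by
  obtain ⟨x, hx, hxv⟩ := intermediate_value_Ioo' hab hcont ⟨hb, ha⟩
  refine ⟨x, ⟨hx, hxv⟩, fun y ⟨hy, hyv⟩ => ?_⟩
  exact hanti.injOn (Ioo_subset_Icc_self hy) (Ioo_subset_Icc_self hx) (hyv.trans hxv.symm)

theorem existsUnique_mem_Ioo_eq_of_convexOn {f : ℝ → ℝ} {a b v : ℝ} (hab : a ≤ b)
    (hcont : ContinuousOn f (Icc a b)) (hconv : ConvexOn ℝ (Icc a b) f)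
    (ha : f a < v) (hb : v < f b) : ∃! x, x ∈ Ioo a b ∧ f x = v := by
  -- A convex function that has risen from `f a < v` to `v` keeps rising strictly.
  have lt_of_eq {x y : ℝ} (hx : x ∈ Ioo a b) (hy : y ∈ Ioo a b) (hxv : f x = v) (hxy : x < y) :
      v < f y := by
    have hseg : x ∈ openSegment ℝ a y := by
      rw [openSegment_eq_Ioo (hx.1.trans hxy)]
      exact ⟨hx.1, hxy⟩
    exact hxv ▸ hconv.lt_right_of_left_lt (left_mem_Icc.2 hab) (Ioo_subset_Icc_self hy) hseg
      (ha.trans_eq hxv.symm)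
  obtain ⟨x, hx, hxv⟩ := intermediate_value_Ioo hab hcont ⟨ha, hb⟩
  refine ⟨x, ⟨hx, hxv⟩, fun y ⟨hy, hyv⟩ => ?_⟩
  rcases lt_trichotomy y x with hyx | hyx | hxy
  · exact absurd hxv (lt_of_eq hy hx hyv hyx).ne'
  · exact hyx
  · exact absurd hyv (lt_of_eq hx hy hxv hxy).ne'

theorem ncard_setOf_mem_Ioo_eq_two_of_existsUnique {α : Type*} [LinearOrder α] {p : α → Prop}
    {a b c : α} (hc : ¬p c) (hleft : ∃! x, x ∈ Ioo a c ∧ p x) (hright : ∃! x, x ∈ Ioo c b ∧ p x) :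
    {x | x ∈ Ioo a b ∧ p x}.ncard = 2 := by
  obtain ⟨x, ⟨hx, hpx⟩, hx_unique⟩ := hleft
  obtain ⟨y, ⟨hy, hpy⟩, hy_unique⟩ := hright
  refine ncard_eq_two.2 ⟨x, y, (hx.2.trans hy.1).ne, ?_⟩
  ext z
  constructor
  · rintro ⟨⟨haz, hzb⟩, hpz⟩
    rcases lt_trichotomy z c with hzc | rfl | hcz
    · exact Or.inl (hx_unique z ⟨⟨haz, hzc⟩, hpz⟩)
    · exact absurd hpz hc
    · exact Or.inr (hy_unique z ⟨⟨hcz, hzb⟩, hpz⟩)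
  · rintro (rfl | rfl)
    · exact ⟨⟨hx.1, hx.2.trans (hy.1.trans hy.2)⟩, hpx⟩
    · exact ⟨⟨(hx.1.trans hx.2).trans hy.1, hy.2⟩, hpy⟩

end UniqueValue

section Elimination

/-- The coefficient of `X₂` in (E2), as a polynomial in `X₁ = x`; it is the denominator of `X₂` once
(E2) is solved for `X₂`. -/
def einsteinDenominator (γ₁ b₁ r x : ℝ) : ℝ :=
  2 * γ₁ * x ^ 2 + (1 - γ₁) + 2 * b₁ - 4 * r * x

/-- The quartic in `X₁ = x` left over when the solution `X₂` of (E2) is substituted into (E1),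
after clearing the squared denominator and a factor `-x`. -/
def einsteinQuartic (γ₁ γ₂ b₁ b₂ r x : ℝ) : ℝ :=
  (1 - γ₂) * einsteinDenominator γ₁ b₁ r x ^ 2
    + 2 * b₂ * (2 * γ₁ * x ^ 2 + (1 - γ₁)) * einsteinDenominator γ₁ b₁ r x
    + 8 * γ₂ * b₂ ^ 2 * x ^ 2

variable {γ₁ γ₂ b₁ b₂ r x y : ℝ}

theorem sq_einsteinDenominator_mul_eq_neg_mul_einsteinQuartic
    (hxy : y * einsteinDenominator γ₁ b₁ r x = -2 * b₂ * x) :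
    einsteinDenominator γ₁ b₁ r x ^ 2 *
        (2 * γ₁ * x ^ 2 * y + (1 - γ₁) * y - 2 * γ₂ * x * y ^ 2 - (1 - γ₂) * x) =
      -x * einsteinQuartic γ₁ γ₂ b₁ b₂ r x := by
  unfold einsteinQuartic
  linear_combination
    ((2 * γ₁ * x ^ 2 + (1 - γ₁)) * einsteinDenominator γ₁ b₁ r x
      - 2 * γ₂ * x * (y * einsteinDenominator γ₁ b₁ r x - 2 * b₂ * x)) * hxy

theorem mul_einsteinDenominator_eq_iff :
    y * einsteinDenominator γ₁ b₁ r x = -2 * b₂ * x ↔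
      2 * b₁ * y + 2 * b₂ * x - 4 * r * x * y + 2 * γ₁ * x ^ 2 * y + (1 - γ₁) * y = 0 := by
  unfold einsteinDenominator
  constructor <;> intro h <;> linear_combination h

theorem einsteinSystem_iff_einsteinQuartic_eq_zero (hx : x ≠ 0)
    (hd : einsteinDenominator γ₁ b₁ r x ≠ 0) :
    EinsteinSystem γ₁ γ₂ b₁ b₂ r x y ↔
      einsteinQuartic γ₁ γ₂ b₁ b₂ r x = 0 ∧ y * einsteinDenominator γ₁ b₁ r x = -2 * b₂ * x := by
  rw [EinsteinSystem, ← mul_einsteinDenominator_eq_iff, and_congr_left_iff]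
  intro hxy
  rw [← mul_eq_zero_iff_left (pow_ne_zero 2 hd),
    sq_einsteinDenominator_mul_eq_neg_mul_einsteinQuartic hxy,
    mul_eq_zero_iff_left (neg_ne_zero.2 hx)]

theorem pos_einsteinSystem_iff (hb₂ : 0 < b₂) :
    0 < x ∧ 0 < y ∧ EinsteinSystem γ₁ γ₂ b₁ b₂ r x y ↔
      (0 < x ∧ einsteinDenominator γ₁ b₁ r x < 0 ∧ einsteinQuartic γ₁ γ₂ b₁ b₂ r x = 0) ∧
        -2 * b₂ * x / einsteinDenominator γ₁ b₁ r x = y := by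
  constructor
  · rintro ⟨hx, hy, h⟩
    have hxy := mul_einsteinDenominator_eq_iff.2 h.2
    have hbx : -2 * b₂ * x < 0 := by linarith [mul_pos hb₂ hx]
    have hd : einsteinDenominator γ₁ b₁ r x < 0 := neg_of_mul_neg_right (hxy.trans_lt hbx) hy.le
    have hQ := ((einsteinSystem_iff_einsteinQuartic_eq_zero hx.ne' hd.ne).1 h).1
    exact ⟨⟨hx, hd, hQ⟩, (eq_div_of_mul_eq hd.ne hxy).symm⟩
  · rintro ⟨⟨hx, hd, hQ⟩, rfl⟩
    have hbx : -2 * b₂ * x < 0 := by linarith [mul_pos hb₂ hx]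
    exact ⟨hx, div_pos_of_neg_of_neg hbx hd,
      (einsteinSystem_iff_einsteinQuartic_eq_zero hx.ne' hd.ne).2 ⟨hQ, div_mul_cancel₀ _ hd.ne⟩⟩

theorem ncard_setOf_pos_einsteinSystem (hb₂ : 0 < b₂) :
    {P : ℝ × ℝ | 0 < P.1 ∧ 0 < P.2 ∧ EinsteinSystem γ₁ γ₂ b₁ b₂ r P.1 P.2}.ncard =
      {x | 0 < x ∧ einsteinDenominator γ₁ b₁ r x < 0 ∧
        einsteinQuartic γ₁ γ₂ b₁ b₂ r x = 0}.ncard := by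
  have hgraph : {P : ℝ × ℝ | 0 < P.1 ∧ 0 < P.2 ∧ EinsteinSystem γ₁ γ₂ b₁ b₂ r P.1 P.2} =
      (fun x => (x, -2 * b₂ * x / einsteinDenominator γ₁ b₁ r x)) ''
        {x | 0 < x ∧ einsteinDenominator γ₁ b₁ r x < 0 ∧
          einsteinQuartic γ₁ γ₂ b₁ b₂ r x = 0} := by
    ext ⟨x, y⟩
    simp [pos_einsteinSystem_iff hb₂]
  rw [hgraph]
  exact ncard_image_of_injective _ fun _ _ h => congrArg Prod.fst h

end Elimination

section G2

/-- The quartic of the `𝔤₂` parameters, multiplied by `864` and expanded at the midpoint `1` of the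
interval on which the denominator is negative. -/
def g2Quartic (x : ℝ) : ℝ :=
  1008 * (x - 1) ^ 4 + 576 * (x - 1) ^ 3 + 32 * (x - 1) ^ 2 - 80 * (x - 1) - 31

theorem einsteinQuartic_g2_eq_zero_iff (x : ℝ) :
    einsteinQuartic (1 / 2) (1 / 6) (1 / 8) (1 / 6) (1 / 2) x = 0 ↔ g2Quartic x = 0 := by
  have hscale : g2Quartic x = 864 * einsteinQuartic (1 / 2) (1 / 6) (1 / 8) (1 / 6) (1 / 2) x := by
    unfold g2Quartic einsteinQuartic einsteinDenominator
    ring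
  simp [hscale]

theorem einsteinDenominator_g2_neg_iff (x : ℝ) :
    einsteinDenominator (1 / 2) (1 / 8) (1 / 2) x < 0 ↔ x ∈ Ioo (1 / 2) (3 / 2) := by
  have hfactor : einsteinDenominator (1 / 2) (1 / 8) (1 / 2) x = (x - 1 / 2) * (x - 3 / 2) := by
    unfold einsteinDenominator
    ring
  rw [hfactor, mul_neg_iff, mem_Ioo]
  constructor
  · rintro (⟨h₁, h₂⟩ | ⟨h₁, h₂⟩) <;> constructor <;> linarith
  · exact fun ⟨h₁, h₂⟩ => Or.inl ⟨sub_pos.2 h₁, sub_neg.2 h₂⟩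

theorem continuous_g2Quartic : Continuous g2Quartic := by
  unfold g2Quartic
  fun_prop

theorem hasDerivAt_g2Quartic (x : ℝ) :
    HasDerivAt g2Quartic
      (4032 * (x - 1) ^ 3 + 1728 * (x - 1) ^ 2 + 64 * (x - 1) - 80) x := by
  have hsub : HasDerivAt (fun x : ℝ => x - 1) 1 x := (hasDerivAt_id x).sub_const 1
  refine ((((((hsub.pow 4).const_mul 1008).add ((hsub.pow 3).const_mul 576)).add
    ((hsub.pow 2).const_mul 32)).sub (hsub.const_mul 80)).sub_const 31).congr_deriv ?_
  push_cast
  ring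

theorem strictAntiOn_g2Quartic : StrictAntiOn g2Quartic (Icc (1 / 2) 1) := by
  refine strictAntiOn_of_deriv_neg (convex_Icc _ _) continuous_g2Quartic.continuousOn fun x hx => ?_
  rw [interior_Icc] at hx
  -- Complete the square in `4032 u ^ 2 + 1728 u + 64`, where `u = x - 1 ≤ 0`.
  have hcubic : 4032 * (x - 1) ^ 3 + 1728 * (x - 1) ^ 2 + 64 * (x - 1) - 80 =
      4032 * (x - 1) * (x - 11 / 14) ^ 2 - 848 / 7 * (x - 1) - 80 := by
    ring
  have hsq : 4032 * (x - 1) * (x - 11 / 14) ^ 2 ≤ 0 :=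
    mul_nonpos_of_nonpos_of_nonneg (by linarith [hx.2]) (sq_nonneg _)
  rw [(hasDerivAt_g2Quartic x).deriv, hcubic]
  linarith [hx.1]

theorem convexOn_g2Quartic : ConvexOn ℝ (Ici 1) g2Quartic := by
  have hderiv₂ (x : ℝ) : HasDerivAt
      (fun x : ℝ => 4032 * (x - 1) ^ 3 + 1728 * (x - 1) ^ 2 + 64 * (x - 1) - 80)
      (12096 * (x - 1) ^ 2 + 3456 * (x - 1) + 64) x := by
    have hsub : HasDerivAt (fun x : ℝ => x - 1) 1 x := (hasDerivAt_id x).sub_const 1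
    refine (((((hsub.pow 3).const_mul 4032).add ((hsub.pow 2).const_mul 1728)).add
      (hsub.const_mul 64)).sub_const 80).congr_deriv ?_
    push_cast
    ring
  refine convexOn_of_hasDerivWithinAt2_nonneg (convex_Ici 1) continuous_g2Quartic.continuousOn
    (fun x _ => (hasDerivAt_g2Quartic x).hasDerivWithinAt)
    (fun x _ => (hderiv₂ x).hasDerivWithinAt) fun x hx => ?_
  have hpos : 0 ≤ x - 1 := sub_nonneg.2 (interior_subset hx)
  positivity

theorem ncard_setOf_g2Quartic_eq_zero :
    {x | x ∈ Ioo (1 / 2) (3 / 2) ∧ g2Quartic x = 0}.ncard = 2 := by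
  have hcont := continuous_g2Quartic
  have hleft : 0 < g2Quartic (1 / 2) := by norm_num [g2Quartic]
  have hmid : g2Quartic 1 < 0 := by norm_num [g2Quartic]
  have hright : 0 < g2Quartic (3 / 2) := by norm_num [g2Quartic]
  have hconv : ConvexOn ℝ (Icc 1 (3 / 2)) g2Quartic :=
    convexOn_g2Quartic.subset Icc_subset_Ici_self (convex_Icc _ _)
  exact ncard_setOf_mem_Ioo_eq_two_of_existsUnique hmid.ne
    (existsUnique_mem_Ioo_eq_of_strictAntiOn (by norm_num) hcont.continuousOn
      strictAntiOn_g2Quartic hleft hmid)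
    (existsUnique_mem_Ioo_eq_of_convexOn (by norm_num) hcont.continuousOn hconv hmid hright)

end G2

/- STATEMENT 3: exactly two positive solutions for (𝔤₂, 𝔰𝔲₂⊕𝔰𝔲₂, ℝ⊕ℝ). -/
theorem g2_exactly_two_einstein_adapted_metrics :
    {P : ℝ × ℝ | 0 < P.1 ∧ 0 < P.2 ∧
      EinsteinSystem (1/2) (1/6) (1/8) (1/6) (1/2) P.1 P.2}.ncard = 2 := by
  rw [ncard_setOf_pos_einsteinSystem (by norm_num), ← ncard_setOf_g2Quartic_eq_zero]
  congr 1
  ext x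
  simp only [mem_ofPred_eq, einsteinDenominator_g2_neg_iff, einsteinQuartic_g2_eq_zero_iff]
  exact and_iff_right_of_imp fun h => by linarith [h.1.1]
end

section
/- There are exactly four pairs (X₁, X₂) of positive real numbers satisfying the Einstein system with parameters γ₁ = 1/2, γ₂ = 1/6, b₁ = 1/24, b₂ = 1/8, r = 1/2. (This is the algebraic content of the theorem: the bisymmetric fibration of Type II corresponding to the triple (𝔢₆, 𝔰𝔲₆ ⊕ 𝔰𝔲₂, 𝔰𝔲₅ ⊕ ℝ ⊕ ℝ) admits, up to homothety, exactly four Einstein adapted metrics.) -/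
/-!
Equation (E2) is linear in `X₂`: it reads `d(X₁) X₂ = 2 b₂ X₁` for a quadratic polynomial `d`.
Substituting `X₂ = 2 b₂ X₁ / d(X₁)` into (E1) leaves a quartic `q(X₁) = 0`. On the admissible range
of parameters, `q > 0` wherever `d ≤ 0` and `X₁ ≠ 0`, so every positive root of `q` automatically
yields a positive `X₂`, and positive solutions of the system correspond to positive roots of `q`.
For the `𝔢₆` parameters `q` alternates in sign at the five points `0 < 1/2 < 1 < 6/5 < 2`.
-/

section SignChanges

open Polynomial

theorem exists_mem_Ioo_eq_zero_of_mul_neg {α R : Type*}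
    [ConditionallyCompleteLinearOrder α] [DenselyOrdered α] [TopologicalSpace α] [OrderTopology α]
    [Ring R] [LinearOrder R] [IsStrictOrderedRing R] [TopologicalSpace R] [OrderClosedTopology R]
    {f : α → R} {a b : α} (hab : a ≤ b) (hf : ContinuousOn f (Set.Icc a b))
    (hsign : f a * f b < 0) : ∃ x ∈ Set.Ioo a b, f x = 0 := by
  rcases mul_neg_iff.1 hsign with ⟨ha, hb⟩ | ⟨ha, hb⟩
  · exact intermediate_value_Ioo' hab hf ⟨hb, ha⟩
  · exact intermediate_value_Ioo hab hf ⟨ha, hb⟩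

theorem exists_strictMono_zeros_of_sign_changes {α R : Type*}
    [ConditionallyCompleteLinearOrder α] [DenselyOrdered α] [TopologicalSpace α] [OrderTopology α]
    [Ring R] [LinearOrder R] [IsStrictOrderedRing R] [TopologicalSpace R] [OrderClosedTopology R]
    {f : α → R} {n : ℕ} {t : Fin (n + 1) → α} (ht : StrictMono t)
    (hf : ContinuousOn f (Set.Icc (t 0) (t (Fin.last n))))
    (hsign : ∀ i : Fin n, f (t i.castSucc) * f (t i.succ) < 0) :
    ∃ z : Fin n → α, StrictMono z ∧
      ∀ i, z i ∈ Set.Ioo (t 0) (t (Fin.last n)) ∧ f (z i) = 0 := by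
  have hzero (i : Fin n) : ∃ x ∈ Set.Ioo (t i.castSucc) (t i.succ), f x = 0 :=
    exists_mem_Ioo_eq_zero_of_mul_neg (ht i.castSucc_lt_succ).le
      (hf.mono (Set.Icc_subset_Icc (ht.monotone (Fin.zero_le _)) (ht.monotone (Fin.le_last _))))
      (hsign i)
  choose z hz hfz using hzero
  refine ⟨z, fun i j hij => ?_, fun i =>
    ⟨⟨(ht.monotone (Fin.zero_le _)).trans_lt (hz i).1,
      (hz i).2.trans_le (ht.monotone (Fin.le_last _))⟩, hfz i⟩⟩
  calc z i < t i.succ := (hz i).2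
    _ ≤ t j.castSucc := ht.monotone (Fin.succ_le_castSucc_iff.2 hij)
    _ < z j := (hz j).1

theorem ncard_roots_gt_eq_of_sign_changes {p : ℝ[X]} {n : ℕ} (hdeg : p.degree = n)
    {t : Fin (n + 1) → ℝ} (ht : StrictMono t)
    (hsign : ∀ i : Fin n, p.eval (t i.castSucc) * p.eval (t i.succ) < 0) :
    {x | t 0 < x ∧ p.eval x = 0}.ncard = n := by
  have hp : p ≠ 0 := by
    rintro rfl
    simp at hdeg
  have hsub : {x | t 0 < x ∧ p.eval x = 0} ⊆ p.rootSet ℝ := fun x hx => by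
    rw [mem_rootSet_of_ne hp, coe_aeval_eq_eval]
    exact hx.2
  have hfin : (p.rootSet ℝ).Finite := rootSet_finite p ℝ
  refine le_antisymm ?_ ?_
  · calc _ ≤ (p.rootSet ℝ).ncard := Set.ncard_le_ncard hsub hfin
      _ ≤ p.natDegree := ncard_rootSet_le p ℝ
      _ = n := natDegree_eq_of_degree_eq_some hdeg
  · obtain ⟨z, hz, hroot⟩ :=
      exists_strictMono_zeros_of_sign_changes ht p.continuous.continuousOn hsign
    have hrange : Set.range z ⊆ {x | t 0 < x ∧ p.eval x = 0} :=
      Set.range_subset_iff.2 fun i => ⟨(hroot i).1.1, (hroot i).2⟩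
    calc n = (Set.range z).ncard := by
          rw [Set.ncard_range_of_injective hz.injective, Nat.card_fin]
      _ ≤ _ := Set.ncard_le_ncard hrange (hfin.subset hsub)

end SignChanges

namespace EinsteinSystem

open Polynomial

/-- The quadratic polynomial `d` for which (E2) reads `d(X₁) X₂ = 2 b₂ X₁`. -/
noncomputable def denom (γ₁ b₁ r : ℝ) : ℝ[X] :=
  C (4 * r) * X - C (2 * γ₁) * X ^ 2 - C (1 - γ₁ + 2 * b₁)

/-- The eliminant of the Einstein system: the quartic in `X₁` left from (E1) after eliminating `X₂`
by means of (E2). The factor `-d(X₁)² / X₁` by which (E1) is multiplied clears the denominators and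
splits off the root `X₁ = 0`. -/
noncomputable def eliminant (γ₁ γ₂ b₁ b₂ r : ℝ) : ℝ[X] :=
  C (1 - γ₂) * denom γ₁ b₁ r ^ 2 + C (8 * γ₂ * b₂ ^ 2) * X ^ 2
    - C (2 * b₂) * (C (2 * γ₁) * X ^ 2 + C (1 - γ₁)) * denom γ₁ b₁ r

variable {γ₁ γ₂ b₁ b₂ r x y : ℝ}

theorem eval_denom :
    (denom γ₁ b₁ r).eval x = 4 * r * x - 2 * γ₁ * x ^ 2 - (1 - γ₁ + 2 * b₁) := by
  simp [denom]

theorem eval_eliminant :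
    (eliminant γ₁ γ₂ b₁ b₂ r).eval x =
      (1 - γ₂) * (denom γ₁ b₁ r).eval x ^ 2 + 8 * γ₂ * b₂ ^ 2 * x ^ 2
        - 2 * b₂ * (2 * γ₁ * x ^ 2 + (1 - γ₁)) * (denom γ₁ b₁ r).eval x := by
  simp [eliminant]

theorem degree_eliminant (hγ₁ : γ₁ ≠ 0) (h : 1 - γ₂ + 2 * b₂ ≠ 0) :
    (eliminant γ₁ γ₂ b₁ b₂ r).degree = 4 := by
  have hlead : 4 * γ₁ ^ 2 * (1 - γ₂ + 2 * b₂) ≠ 0 := by positivity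
  unfold eliminant denom
  compute_degree!
  exact fun hcoeff => hlead (by linear_combination hcoeff)

theorem mul_eval_denom (h : EinsteinSystem γ₁ γ₂ b₁ b₂ r x y) :
    y * (denom γ₁ b₁ r).eval x = 2 * b₂ * x := by
  rw [eval_denom]
  linear_combination -h.2

theorem iff_eliminant_eq_zero (hx : x ≠ 0) (hd : (denom γ₁ b₁ r).eval x ≠ 0) :
    EinsteinSystem γ₁ γ₂ b₁ b₂ r x y ↔
      (eliminant γ₁ γ₂ b₁ b₂ r).eval x = 0 ∧ y = 2 * b₂ * x / (denom γ₁ b₁ r).eval x := by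
  rw [eq_div_iff hd, and_comm]
  have hE1_mul (hy : y * (denom γ₁ b₁ r).eval x = 2 * b₂ * x) :
      (denom γ₁ b₁ r).eval x ^ 2 *
          (2 * γ₁ * x ^ 2 * y + (1 - γ₁) * y - 2 * γ₂ * x * y ^ 2 - (1 - γ₂) * x) =
        -x * (eliminant γ₁ γ₂ b₁ b₂ r).eval x := by
    rw [eval_eliminant]
    linear_combination ((2 * γ₁ * x ^ 2 + (1 - γ₁)) * (denom γ₁ b₁ r).eval x
      - 2 * γ₂ * x * (y * (denom γ₁ b₁ r).eval x + 2 * b₂ * x)) * hy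
  constructor
  · intro h
    have hmul := hE1_mul h.mul_eval_denom
    rw [h.1, mul_zero] at hmul
    exact ⟨h.mul_eval_denom, (mul_eq_zero.1 hmul.symm).resolve_left (neg_ne_zero.2 hx)⟩
  · rintro ⟨hy, hq⟩
    have hmul := hE1_mul hy
    rw [hq, mul_zero] at hmul
    refine ⟨(mul_eq_zero.1 hmul).resolve_left (pow_ne_zero 2 hd), ?_⟩
    rw [eval_denom] at hy
    linear_combination -hy

theorem eval_denom_pos_of_eliminant_eq_zero (hγ₁ : γ₁ ∈ Set.Icc 0 1) (hγ₂ : γ₂ ∈ Set.Ioc 0 1)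
    (hb₂ : 0 < b₂) (hx : x ≠ 0) (hq : (eliminant γ₁ γ₂ b₁ b₂ r).eval x = 0) :
    0 < (denom γ₁ b₁ r).eval x := by
  obtain ⟨hγ₁_nonneg, hγ₁_le⟩ := hγ₁
  obtain ⟨hγ₂_pos, hγ₂_le⟩ := hγ₂
  by_contra! hd
  rw [eval_eliminant] at hq
  have hsq : 0 ≤ (1 - γ₂) * (denom γ₁ b₁ r).eval x ^ 2 :=
    mul_nonneg (sub_nonneg.2 hγ₂_le) (sq_nonneg _)
  have hmid : 0 < 8 * γ₂ * b₂ ^ 2 * x ^ 2 := by positivity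
  have hlast : 2 * b₂ * (2 * γ₁ * x ^ 2 + (1 - γ₁)) * (denom γ₁ b₁ r).eval x ≤ 0 := by
    have : 0 ≤ 1 - γ₁ := sub_nonneg.2 hγ₁_le
    exact mul_nonpos_of_nonneg_of_nonpos (by positivity) hd
  linarith

theorem setOf_pos_solutions_eq_graphOn (hγ₁ : γ₁ ∈ Set.Icc 0 1) (hγ₂ : γ₂ ∈ Set.Ioc 0 1)
    (hb₂ : 0 < b₂) :
    {P : ℝ × ℝ | 0 < P.1 ∧ 0 < P.2 ∧ EinsteinSystem γ₁ γ₂ b₁ b₂ r P.1 P.2} =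
      {x | 0 < x ∧ (eliminant γ₁ γ₂ b₁ b₂ r).eval x = 0}.graphOn
        fun x => 2 * b₂ * x / (denom γ₁ b₁ r).eval x := by
  ext ⟨x, y⟩
  rw [Set.mem_graphOn]
  constructor
  · rintro ⟨hx : 0 < x, hy : 0 < y, hxy : EinsteinSystem γ₁ γ₂ b₁ b₂ r x y⟩
    have hd : 0 < (denom γ₁ b₁ r).eval x :=
      pos_of_mul_pos_right (hxy.mul_eval_denom ▸ by positivity) hy.le
    obtain ⟨hq, hy_eq⟩ := (iff_eliminant_eq_zero hx.ne' hd.ne').1 hxy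
    exact ⟨⟨hx, hq⟩, hy_eq.symm⟩
  · rintro ⟨⟨hx : 0 < x, hq⟩, hy_eq : 2 * b₂ * x / (denom γ₁ b₁ r).eval x = y⟩
    have hd : 0 < (denom γ₁ b₁ r).eval x :=
      eval_denom_pos_of_eliminant_eq_zero hγ₁ hγ₂ hb₂ hx.ne' hq
    have hy : 0 < y := hy_eq ▸ by positivity
    exact ⟨hx, hy, (iff_eliminant_eq_zero hx.ne' hd.ne').2 ⟨hq, hy_eq.symm⟩⟩

theorem ncard_pos_solutions (hγ₁ : γ₁ ∈ Set.Icc 0 1) (hγ₂ : γ₂ ∈ Set.Ioc 0 1) (hb₂ : 0 < b₂) :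
    {P : ℝ × ℝ | 0 < P.1 ∧ 0 < P.2 ∧ EinsteinSystem γ₁ γ₂ b₁ b₂ r P.1 P.2}.ncard =
      {x | 0 < x ∧ (eliminant γ₁ γ₂ b₁ b₂ r).eval x = 0}.ncard := by
  rw [setOf_pos_solutions_eq_graphOn hγ₁ hγ₂ hb₂, Set.ncard_graphOn]

theorem eval_eliminant_e6 :
    (eliminant (1/2) (1/6) (1/24) (1/8) (1/2)).eval x =
      (234 * x ^ 4 - 828 * x ^ 3 + 993 * x ^ 2 - 474 * x + 77) / 216 := by
  rw [eval_eliminant, eval_denom]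
  ring

end EinsteinSystem

/- STATEMENT 4: exactly four positive solutions for (𝔢₆, 𝔰𝔲₆⊕𝔰𝔲₂, 𝔰𝔲₅⊕ℝ⊕ℝ). -/
theorem e6_exactly_four_einstein_adapted_metrics :
    {P : ℝ × ℝ | 0 < P.1 ∧ 0 < P.2 ∧
      EinsteinSystem (1/2) (1/6) (1/24) (1/8) (1/2) P.1 P.2}.ncard = 4 := by
  rw [EinsteinSystem.ncard_pos_solutions (by norm_num) (by norm_num) (by norm_num)]
  let t : Fin 5 → ℝ := ![0, 1/2, 1, 6/5, 2]
  have ht : StrictMono t := by norm_num [t, Subsingleton.strictMono ![(2 : ℝ)]]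
  have hsign (i : Fin 4) :
      (EinsteinSystem.eliminant (1/2) (1/6) (1/24) (1/8) (1/2)).eval (t i.castSucc) *
        (EinsteinSystem.eliminant (1/2) (1/6) (1/24) (1/8) (1/2)).eval (t i.succ) < 0 := by
    simp only [EinsteinSystem.eval_eliminant_e6]
    fin_cases i <;> norm_num [t, Fin.succ]
  exact ncard_roots_gt_eq_of_sign_changes
    (EinsteinSystem.degree_eliminant (by norm_num) (by norm_num)) ht hsign
end

section
/- There is no pair (X₁, X₂) of positive real numbers satisfying the Einstein system with parameters γ₁ = 3/5, γ₂ = 1/15, b₁ = 1/4, b₂ = 1/60, r = 1/2. (This is the algebraic content of the theorem: the bisymmetric fibration of Type II corresponding to the triple (𝔢₈, 𝔢₇ ⊕ 𝔰𝔲₂, 𝔰𝔲₈ ⊕ ℝ) admits no Einstein adapted metric.) -/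
/-! Equation (E2) reads `X₂ * q X₁ + 2 * b₂ * X₁ = 0` with
`q X = 2 * γ₁ * X ^ 2 - 4 * r * X + (2 * b₁ + 1 - γ₁)`. If `q` has nonpositive discriminant and
positive leading coefficient, then it is nonnegative, so the left-hand side is positive at positive
`X₁` and `X₂`. For `𝔢₈` the discriminant of `q` is `4 - 108 / 25 < 0`. -/

theorem quadratic_nonneg_of_discrim_nonpos {R : Type*} [CommRing R] [LinearOrder R]
    [IsStrictOrderedRing R] {a b c : R} (ha : 0 < a) (h : discrim a b c ≤ 0) (x : R) :
    0 ≤ a * (x * x) + b * x + c := by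
  have complete_square :
      4 * a * (a * (x * x) + b * x + c) = (2 * a * x + b) ^ 2 - discrim a b c := by
    rw [discrim]
    ring
  have scaled_nonneg : 0 ≤ 4 * a * (a * (x * x) + b * x + c) := by
    rw [complete_square]
    exact sub_nonneg.2 (h.trans (sq_nonneg _))
  exact nonneg_of_mul_nonneg_right scaled_nonneg (by positivity)

theorem EinsteinSystem.second_equation_lhs_pos {γ₁ b₁ b₂ r : ℝ} (hγ₁ : 0 < γ₁) (hb₂ : 0 < b₂)
    (hdiscrim : discrim (2 * γ₁) (-(4 * r)) (2 * b₁ + 1 - γ₁) ≤ 0)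
    {X₁ X₂ : ℝ} (hX₁ : 0 < X₁) (hX₂ : 0 ≤ X₂) :
    0 < 2 * b₁ * X₂ + 2 * b₂ * X₁ - 4 * r * X₁ * X₂ + 2 * γ₁ * X₁ ^ 2 * X₂ + (1 - γ₁) * X₂ := by
  have quadratic_nonneg : 0 ≤ 2 * γ₁ * (X₁ * X₁) + -(4 * r) * X₁ + (2 * b₁ + 1 - γ₁) :=
    quadratic_nonneg_of_discrim_nonpos (by positivity) hdiscrim X₁
  calc
    0 < X₂ * (2 * γ₁ * (X₁ * X₁) + -(4 * r) * X₁ + (2 * b₁ + 1 - γ₁)) + 2 * b₂ * X₁ := by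
      positivity
    _ = _ := by ring

theorem e8_no_einstein_adapted_metric_general {γ₁ γ₂ b₁ b₂ r : ℝ} (hγ₁ : 0 < γ₁) (hb₂ : 0 < b₂)
    (hdiscrim : discrim (2 * γ₁) (-(4 * r)) (2 * b₁ + 1 - γ₁) ≤ 0) :
    ¬ ∃ X₁ X₂ : ℝ, 0 < X₁ ∧ 0 < X₂ ∧ EinsteinSystem γ₁ γ₂ b₁ b₂ r X₁ X₂ := by
  rintro ⟨X₁, X₂, hX₁, hX₂, -, second_equation⟩
  exact (EinsteinSystem.second_equation_lhs_pos hγ₁ hb₂ hdiscrim hX₁ hX₂.le).ne' second_equation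

/- STATEMENT 8: no positive solutions for (𝔢₈, 𝔢₇⊕𝔰𝔲₂, 𝔰𝔲₈⊕ℝ). -/
theorem e8_no_einstein_adapted_metric :
    ¬ ∃ X₁ X₂ : ℝ, 0 < X₁ ∧ 0 < X₂ ∧
      EinsteinSystem (3/5) (1/15) (1/4) (1/60) (1/2) X₁ X₂ :=
  e8_no_einstein_adapted_metric_general (by norm_num) (by norm_num) (by norm_num [discrim])
end

section
/- Let 0 < γ₁ < 1, set γ₂ = 1 − γ₁, let b₁, b₂ ≥ 0 and r > 0, and set D = 4r² − 4b₁γ₁ − 4b₂(1−γ₁) − 2γ₁(1−γ₁). Then there exists a pair (X₁, X₂) of positive reals satisfying the Einstein system together with the constraint (1−γ₁)X₂ = γ₁X₁ if and only if D ≥ 0; moreover, in that case, the pairs of positive reals satisfying the system and this constraint are exactly those with X₁ = (2r + √D)/(2γ₁) or X₁ = (2r − √D)/(2γ₁), and X₂ = γ₁X₁/(1−γ₁) (both values of X₁ are positive). (This is the algebraic content of the corollary describing Einstein adapted metrics whose restriction to the fiber is also Einstein, in the case γ₂ = 1 − γ₁.) -/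
/-!
When `γ₂ = 1 - γ₁`, equation (E1) factors as `((1 - γ₁) X₂ - γ₁ X₁) (1 - 2 X₁ X₂) = 0`, so it is
implied by the fiber-Einstein constraint. Eliminating `X₂` through the constraint makes (E2)
divisible by `X₁`, and the remaining quadratic, after completing the square, is
`(2 γ₁ X₁ - 2 r)² = D`. Its roots are both positive because `D < (2 r)²`.
-/

/-- The quantity `D` of the theorem: up to a positive factor, the discriminant of the quadratic
equation for `X₁` obtained by eliminating `X₂` through the fiber-Einstein constraint. -/
def fiberEinsteinDiscr (γ b₁ b₂ r : ℝ) : ℝ :=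
  4 * r ^ 2 - 4 * b₁ * γ - 4 * b₂ * (1 - γ) - 2 * γ * (1 - γ)

/-- The pair `(X₁, X₂)` defines, for `γ₁ = γ` and `γ₂ = 1 - γ`, an Einstein adapted metric whose
restriction to the fiber is also Einstein. -/
def IsFiberEinsteinSolution (γ b₁ b₂ r X₁ X₂ : ℝ) : Prop :=
  0 < X₁ ∧ 0 < X₂ ∧ EinsteinSystem γ (1 - γ) b₁ b₂ r X₁ X₂ ∧ (1 - γ) * X₂ = γ * X₁

theorem mul_sub_sq_eq_sq_iff {K : Type*} [Field K] {a : K} (ha : a ≠ 0) (c s x : K) :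
    (a * x - c) ^ 2 = s ^ 2 ↔ x = (c + s) / a ∨ x = (c - s) / a := by
  rw [sq_eq_sq_iff_eq_or_eq_neg, eq_div_iff ha, eq_div_iff ha, sub_eq_iff_eq_add,
    sub_eq_iff_eq_add, mul_comm a x, add_comm s c, neg_add_eq_sub]

section

variable {γ b₁ b₂ r X₁ X₂ : ℝ}

theorem einsteinSystem_one_sub_iff :
    EinsteinSystem γ (1 - γ) b₁ b₂ r X₁ X₂ ↔
      ((1 - γ) * X₂ = γ * X₁ ∨ 2 * X₁ * X₂ = 1) ∧
        2 * b₁ * X₂ + 2 * b₂ * X₁ - 4 * r * X₁ * X₂ + 2 * γ * X₁ ^ 2 * X₂ + (1 - γ) * X₂ = 0 := by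
  have factorization :
      2 * γ * X₁ ^ 2 * X₂ + (1 - γ) * X₂ - 2 * (1 - γ) * X₁ * X₂ ^ 2 - (1 - (1 - γ)) * X₁ =
        ((1 - γ) * X₂ - γ * X₁) * (1 - 2 * X₁ * X₂) := by
    ring
  rw [EinsteinSystem, factorization, mul_eq_zero, sub_eq_zero, sub_eq_zero, eq_comm (a := 1)]

theorem einsteinSystem_iff_sq_eq_fiberEinsteinDiscr (hγ : γ ≠ 1) (hX₁ : X₁ ≠ 0)
    (hX : (1 - γ) * X₂ = γ * X₁) :
    EinsteinSystem γ (1 - γ) b₁ b₂ r X₁ X₂ ↔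
      (2 * γ * X₁ - 2 * r) ^ 2 = fiberEinsteinDiscr γ b₁ b₂ r := by
  have elimination :
      2 * (1 - γ) *
          (2 * b₁ * X₂ + 2 * b₂ * X₁ - 4 * r * X₁ * X₂ + 2 * γ * X₁ ^ 2 * X₂ + (1 - γ) * X₂) =
        X₁ * ((2 * γ * X₁ - 2 * r) ^ 2 - fiberEinsteinDiscr γ b₁ b₂ r) := by
    rw [fiberEinsteinDiscr]
    linear_combination (4 * b₁ - 8 * r * X₁ + 4 * γ * X₁ ^ 2 + 2 * (1 - γ)) * hX
  have hγ' : 2 * (1 - γ) ≠ 0 := mul_ne_zero two_ne_zero (sub_ne_zero.2 hγ.symm)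
  rw [einsteinSystem_one_sub_iff, and_iff_right (Or.inl hX), ← mul_eq_zero_iff_left hγ',
    elimination, mul_eq_zero_iff_left hX₁, sub_eq_zero]

theorem isFiberEinsteinSolution_iff_sq_eq (hγ₀ : 0 < γ) (hγ₁ : γ < 1) :
    IsFiberEinsteinSolution γ b₁ b₂ r X₁ X₂ ↔
      0 < X₁ ∧ (2 * γ * X₁ - 2 * r) ^ 2 = fiberEinsteinDiscr γ b₁ b₂ r ∧
        X₂ = γ * X₁ / (1 - γ) := by
  have hγ : 0 < 1 - γ := sub_pos.2 hγ₁
  have constraint_iff : (1 - γ) * X₂ = γ * X₁ ↔ X₂ = γ * X₁ / (1 - γ) := by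
    rw [eq_div_iff hγ.ne', mul_comm]
  constructor
  · rintro ⟨hX₁, -, hE, hX⟩
    exact ⟨hX₁, (einsteinSystem_iff_sq_eq_fiberEinsteinDiscr hγ₁.ne hX₁.ne' hX).1 hE,
      constraint_iff.1 hX⟩
  · rintro ⟨hX₁, hsq, hX₂⟩
    have hX := constraint_iff.2 hX₂
    exact ⟨hX₁, hX₂ ▸ by positivity,
      (einsteinSystem_iff_sq_eq_fiberEinsteinDiscr hγ₁.ne hX₁.ne' hX).2 hsq, hX⟩

theorem isFiberEinsteinSolution_iff_eq_div (hγ₀ : 0 < γ) (hγ₁ : γ < 1)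
    (hD : 0 ≤ fiberEinsteinDiscr γ b₁ b₂ r) :
    IsFiberEinsteinSolution γ b₁ b₂ r X₁ X₂ ↔
      0 < X₁ ∧ (X₁ = (2 * r + √(fiberEinsteinDiscr γ b₁ b₂ r)) / (2 * γ) ∨
          X₁ = (2 * r - √(fiberEinsteinDiscr γ b₁ b₂ r)) / (2 * γ)) ∧
        X₂ = γ * X₁ / (1 - γ) := by
  have h2γ : 2 * γ ≠ 0 := by positivity
  rw [isFiberEinsteinSolution_iff_sq_eq hγ₀ hγ₁, ← mul_sub_sq_eq_sq_iff h2γ, Real.sq_sqrt hD]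

theorem exists_isFiberEinsteinSolution_iff (hγ₀ : 0 < γ) (hγ₁ : γ < 1) (hr : 0 < r) :
    (∃ X₁ X₂, IsFiberEinsteinSolution γ b₁ b₂ r X₁ X₂) ↔ 0 ≤ fiberEinsteinDiscr γ b₁ b₂ r := by
  constructor
  · rintro ⟨X₁, X₂, hX⟩
    exact ((isFiberEinsteinSolution_iff_sq_eq hγ₀ hγ₁).1 hX).2.1 ▸ sq_nonneg _
  · intro hD
    exact ⟨_, _, (isFiberEinsteinSolution_iff_eq_div hγ₀ hγ₁ hD).2
      ⟨by positivity, Or.inl rfl, rfl⟩⟩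

theorem sqrt_fiberEinsteinDiscr_lt_iff (hr : 0 < r) :
    √(fiberEinsteinDiscr γ b₁ b₂ r) < 2 * r ↔
      0 < 2 * b₁ * γ + 2 * b₂ * (1 - γ) + γ * (1 - γ) := by
  rw [Real.sqrt_lt' (by positivity), fiberEinsteinDiscr]
  constructor <;> intro h <;> linarith

end

/- STATEMENT 9: case γ₂ = 1 − γ₁ with the fiber-Einstein constraint (1−γ₁)X₂ = γ₁X₁:
a positive solution exists iff D ≥ 0, and in that case the positive solutions are
exactly X₁ = (2r ± √D)/(2γ₁), X₂ = γ₁X₁/(1−γ₁), both values of X₁ being positive. -/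
theorem einstein_system_fiber_einstein_case
    (γ₁ b₁ b₂ r : ℝ) (hγ0 : 0 < γ₁) (hγ1 : γ₁ < 1)
    (hb₁ : 0 ≤ b₁) (hb₂ : 0 ≤ b₂) (hr : 0 < r)
    (D : ℝ) (hD : D = 4*r^2 - 4*b₁*γ₁ - 4*b₂*(1-γ₁) - 2*γ₁*(1-γ₁)) :
    ((∃ X₁ X₂ : ℝ, 0 < X₁ ∧ 0 < X₂ ∧
        EinsteinSystem γ₁ (1-γ₁) b₁ b₂ r X₁ X₂ ∧ (1-γ₁)*X₂ = γ₁*X₁) ↔ 0 ≤ D) ∧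
    (0 ≤ D →
      (∀ X₁ X₂ : ℝ,
        (0 < X₁ ∧ 0 < X₂ ∧
          EinsteinSystem γ₁ (1-γ₁) b₁ b₂ r X₁ X₂ ∧ (1-γ₁)*X₂ = γ₁*X₁) ↔
        ((X₁ = (2*r + Real.sqrt D)/(2*γ₁) ∨ X₁ = (2*r - Real.sqrt D)/(2*γ₁)) ∧
          X₂ = γ₁*X₁/(1-γ₁))) ∧
      0 < (2*r + Real.sqrt D)/(2*γ₁) ∧ 0 < (2*r - Real.sqrt D)/(2*γ₁)) := by
  obtain rfl : D = fiberEinsteinDiscr γ₁ b₁ b₂ r := hD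
  have := sub_pos.2 hγ1
  have hsqrt : √(fiberEinsteinDiscr γ₁ b₁ b₂ r) < 2 * r :=
    (sqrt_fiberEinsteinDiscr_lt_iff hr).2 (by positivity)
  have hplus : 0 < (2 * r + √(fiberEinsteinDiscr γ₁ b₁ b₂ r)) / (2 * γ₁) := by positivity
  have hminus : 0 < (2 * r - √(fiberEinsteinDiscr γ₁ b₁ b₂ r)) / (2 * γ₁) :=
    div_pos (sub_pos.2 hsqrt) (by positivity)
  refine ⟨exists_isFiberEinsteinSolution_iff hγ0 hγ1 hr, fun hD => ⟨fun X₁ X₂ => ?_, hplus, hminus⟩⟩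
  refine (isFiberEinsteinSolution_iff_eq_div hγ0 hγ1 hD).trans (and_iff_right_of_imp ?_)
  rintro ⟨rfl | rfl, -⟩
  exacts [hplus, hminus]
end

section
/- Let 0 < γ₁ < 1, set γ₂ = γ₁, and let b₁, b₂ ≥ 0 and r > 0. Then a pair (X₁, X₂) of positive reals satisfies the Einstein system if and only if either (a) X₁ = X₂ and 2γ₁X₁² − 4rX₁ + (2(b₁ + b₂) + 1 − γ₁) = 0, or (b) 2γ₁X₁X₂ = 1 − γ₁ and 2γ₁(2b₂ + 1 − γ₁)X₁² − 4r(1−γ₁)X₁ + (1−γ₁)(2b₁ + 1 − γ₁) = 0. In case (b), setting D = 4r²(1−γ₁) − 2γ₁(2b₂+1−γ₁)(2b₁+1−γ₁), a solution exists only if D ≥ 0, and then X₁ = (2r(1−γ₁) ± √((1−γ₁)D))/(2γ₁(2b₂+1−γ₁)) and X₂ = (1−γ₁)/(2γ₁X₁). (This is the algebraic content of the corollary classifying all Einstein adapted metrics in the case γ₂ = γ₁: case (a) corresponds to binormal metrics, case (b) to metrics whose restriction to the fiber is not Einstein.) -/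
/-! With equal Casimir eigenvalues `γ`, the left-hand side of (E1) factors as
`(X₁ - X₂) * (2γX₁X₂ - (1 - γ))`. On each branch (E2), up to a nonzero factor, becomes a quadratic
equation in `X₁` alone; on the second branch `(1 - γ)D` is a quarter of its discriminant. -/

theorem reduced_quadratic_eq_zero_iff {a b c x : ℝ} (ha : a ≠ 0) :
    a * x ^ 2 - 2 * b * x + c = 0 ↔
      0 ≤ b ^ 2 - a * c ∧ (x = (b + √(b ^ 2 - a * c)) / a ∨ x = (b - √(b ^ 2 - a * c)) / a) := by
  have completed_square : a * x ^ 2 - 2 * b * x + c = 0 ↔ (a * x - b) ^ 2 = b ^ 2 - a * c := by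
    rw [← mul_right_inj' ha, mul_zero]
    constructor <;> intro h <;> linear_combination h
  have root_iff (s : ℝ) : x = (b + s) / a ↔ a * x - b = s := by
    rw [eq_div_iff ha, mul_comm x, sub_eq_iff_eq_add']
  rw [completed_square, sub_eq_add_neg b, root_iff, root_iff, ← sq_eq_sq_iff_eq_or_eq_neg]
  constructor
  · intro h
    have discr_nonneg : 0 ≤ b ^ 2 - a * c := h ▸ sq_nonneg _
    exact ⟨discr_nonneg, h.trans (Real.sq_sqrt discr_nonneg).symm⟩
  · rintro ⟨discr_nonneg, h⟩
    exact h.trans (Real.sq_sqrt discr_nonneg)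

section EqualGamma

variable {γ b₁ b₂ r X X₁ X₂ : ℝ}

theorem EinsteinSystem.eq_or_mul_eq (h : EinsteinSystem γ γ b₁ b₂ r X₁ X₂) :
    X₁ = X₂ ∨ 2 * γ * X₁ * X₂ = 1 - γ := by
  have factored : (X₁ - X₂) * (2 * γ * X₁ * X₂ - (1 - γ)) = 0 := by linear_combination h.1
  simpa only [mul_eq_zero, sub_eq_zero] using factored

theorem einsteinSystem_self_iff (hX : X ≠ 0) :
    EinsteinSystem γ γ b₁ b₂ r X X ↔ 2 * γ * X ^ 2 - 4 * r * X + (2 * (b₁ + b₂) + 1 - γ) = 0 := by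
  have second_eq : 2 * b₁ * X + 2 * b₂ * X - 4 * r * X * X + 2 * γ * X ^ 2 * X + (1 - γ) * X =
      X * (2 * γ * X ^ 2 - 4 * r * X + (2 * (b₁ + b₂) + 1 - γ)) := by ring
  rw [EinsteinSystem, second_eq, mul_eq_zero_iff_left hX]
  exact and_iff_right (by ring)

theorem einsteinSystem_iff_of_mul_eq (hX₁ : X₁ ≠ 0) (h : 2 * γ * X₁ * X₂ = 1 - γ) :
    EinsteinSystem γ γ b₁ b₂ r X₁ X₂ ↔
      2 * γ * (2 * b₂ + 1 - γ) * X₁ ^ 2 - 4 * r * (1 - γ) * X₁ +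
        (1 - γ) * (2 * b₁ + 1 - γ) = 0 := by
  have hγ : γ ≠ 0 := by rintro rfl; norm_num at h
  have second_eq :
      2 * γ * X₁ *
        (2 * b₁ * X₂ + 2 * b₂ * X₁ - 4 * r * X₁ * X₂ + 2 * γ * X₁ ^ 2 * X₂ + (1 - γ) * X₂) =
      2 * γ * (2 * b₂ + 1 - γ) * X₁ ^ 2 - 4 * r * (1 - γ) * X₁ + (1 - γ) * (2 * b₁ + 1 - γ) := by
    linear_combination (2 * b₁ - 4 * r * X₁ + 2 * γ * X₁ ^ 2 + 1 - γ) * h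
  rw [← second_eq, mul_eq_zero_iff_left (by positivity)]
  exact and_iff_right (by linear_combination (X₁ - X₂) * h)

theorem einsteinSystem_equal_gamma_iff (hX₁ : X₁ ≠ 0) :
    EinsteinSystem γ γ b₁ b₂ r X₁ X₂ ↔
      (X₁ = X₂ ∧ 2 * γ * X₁ ^ 2 - 4 * r * X₁ + (2 * (b₁ + b₂) + 1 - γ) = 0) ∨
      (2 * γ * X₁ * X₂ = 1 - γ ∧
        2 * γ * (2 * b₂ + 1 - γ) * X₁ ^ 2 - 4 * r * (1 - γ) * X₁ +
          (1 - γ) * (2 * b₁ + 1 - γ) = 0) := by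
  rw [← and_iff_right_of_imp (EinsteinSystem.eq_or_mul_eq (X₁ := X₁)), or_and_right]
  refine or_congr (and_congr_right ?_) (and_congr_right (einsteinSystem_iff_of_mul_eq hX₁))
  rintro rfl
  exact einsteinSystem_self_iff hX₁

end EqualGamma

theorem einstein_system_equal_gamma_case_general (γ b₁ b₂ r D : ℝ)
    (hD : D = 4 * r ^ 2 * (1 - γ) - 2 * γ * (2 * b₂ + 1 - γ) * (2 * b₁ + 1 - γ)) :
    (∀ X₁ X₂ : ℝ, X₁ ≠ 0 →
      (EinsteinSystem γ γ b₁ b₂ r X₁ X₂ ↔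
        ((X₁ = X₂ ∧ 2 * γ * X₁ ^ 2 - 4 * r * X₁ + (2 * (b₁ + b₂) + 1 - γ) = 0) ∨
         (2 * γ * X₁ * X₂ = 1 - γ ∧
           2 * γ * (2 * b₂ + 1 - γ) * X₁ ^ 2 - 4 * r * (1 - γ) * X₁ +
             (1 - γ) * (2 * b₁ + 1 - γ) = 0)))) ∧
    (γ < 1 → 2 * b₂ + 1 - γ ≠ 0 → ∀ X₁ X₂ : ℝ,
      EinsteinSystem γ γ b₁ b₂ r X₁ X₂ → 2 * γ * X₁ * X₂ = 1 - γ →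
      0 ≤ D ∧
      (X₁ = (2 * r * (1 - γ) + √((1 - γ) * D)) / (2 * γ * (2 * b₂ + 1 - γ)) ∨
       X₁ = (2 * r * (1 - γ) - √((1 - γ) * D)) / (2 * γ * (2 * b₂ + 1 - γ))) ∧
      X₂ = (1 - γ) / (2 * γ * X₁)) := by
  refine ⟨fun _ _ => einsteinSystem_equal_gamma_iff, fun hγ hb₂ X₁ X₂ hE hmul => ?_⟩
  have hγ_sub : 0 < 1 - γ := sub_pos.2 hγ
  have hγX₁ : 2 * γ * X₁ ≠ 0 := left_ne_zero_of_mul (hmul ▸ hγ_sub.ne')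
  have hγ_ne : 2 * γ ≠ 0 := left_ne_zero_of_mul hγX₁
  have hX₁ : X₁ ≠ 0 := right_ne_zero_of_mul hγX₁
  have quadratic :
      2 * γ * (2 * b₂ + 1 - γ) * X₁ ^ 2 - 2 * (2 * r * (1 - γ)) * X₁ +
        (1 - γ) * (2 * b₁ + 1 - γ) = 0 := by
    linear_combination (einsteinSystem_iff_of_mul_eq hX₁ hmul).1 hE
  have reduced_discr :
      (2 * r * (1 - γ)) ^ 2 - 2 * γ * (2 * b₂ + 1 - γ) * ((1 - γ) * (2 * b₁ + 1 - γ)) =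
        (1 - γ) * D := by
    rw [hD]
    ring
  rw [reduced_quadratic_eq_zero_iff (mul_ne_zero hγ_ne hb₂), reduced_discr] at quadratic
  obtain ⟨discr_nonneg, roots⟩ := quadratic
  exact ⟨nonneg_of_mul_nonneg_right discr_nonneg hγ_sub, roots,
    eq_div_of_mul_eq hγX₁ (by rw [mul_comm, hmul])⟩

/- STATEMENT 10: case γ₂ = γ₁. A positive pair solves the Einstein system iff
(a) X₁ = X₂ and 2γ₁X₁² − 4rX₁ + (2(b₁+b₂)+1−γ₁) = 0, or
(b) 2γ₁X₁X₂ = 1 − γ₁ and 2γ₁(2b₂+1−γ₁)X₁² − 4r(1−γ₁)X₁ + (1−γ₁)(2b₁+1−γ₁) = 0.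
In case (b), with D = 4r²(1−γ₁) − 2γ₁(2b₂+1−γ₁)(2b₁+1−γ₁), a solution forces D ≥ 0,
X₁ = (2r(1−γ₁) ± √((1−γ₁)D))/(2γ₁(2b₂+1−γ₁)) and X₂ = (1−γ₁)/(2γ₁X₁). -/
theorem einstein_system_equal_gamma_case
    (γ₁ b₁ b₂ r : ℝ) (hγ0 : 0 < γ₁) (hγ1 : γ₁ < 1)
    (hb₁ : 0 ≤ b₁) (hb₂ : 0 ≤ b₂) (hr : 0 < r)
    (D : ℝ) (hD : D = 4*r^2*(1-γ₁) - 2*γ₁*(2*b₂+1-γ₁)*(2*b₁+1-γ₁)) :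
    (∀ X₁ X₂ : ℝ, 0 < X₁ → 0 < X₂ →
      (EinsteinSystem γ₁ γ₁ b₁ b₂ r X₁ X₂ ↔
        ((X₁ = X₂ ∧ 2*γ₁*X₁^2 - 4*r*X₁ + (2*(b₁+b₂) + 1 - γ₁) = 0) ∨
         (2*γ₁*X₁*X₂ = 1 - γ₁ ∧
           2*γ₁*(2*b₂+1-γ₁)*X₁^2 - 4*r*(1-γ₁)*X₁ + (1-γ₁)*(2*b₁+1-γ₁) = 0)))) ∧
    (∀ X₁ X₂ : ℝ, 0 < X₁ → 0 < X₂ →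
      EinsteinSystem γ₁ γ₁ b₁ b₂ r X₁ X₂ → 2*γ₁*X₁*X₂ = 1 - γ₁ →
      0 ≤ D ∧
      (X₁ = (2*r*(1-γ₁) + Real.sqrt ((1-γ₁)*D))/(2*γ₁*(2*b₂+1-γ₁)) ∨
       X₁ = (2*r*(1-γ₁) - Real.sqrt ((1-γ₁)*D))/(2*γ₁*(2*b₂+1-γ₁))) ∧
      X₂ = (1-γ₁)/(2*γ₁*X₁)) := by
  obtain ⟨classification, roots⟩ := einstein_system_equal_gamma_case_general γ₁ b₁ b₂ r D hD
  exact ⟨fun X₁ X₂ hX₁ _ => classification X₁ X₂ hX₁.ne',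
    fun X₁ X₂ _ _ => roots hγ1 (by linarith) X₁ X₂⟩
end
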